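/- Let 1 ≤ k ≤ n, m ≥ k, and η ∈ [0,1]. Suppose the degree distribution is the binomial distribution Ω_d = C(n,d)/(2^n−1) for 1 ≤ d ≤ n, so that each LT row is uniformly distributed over the 2^n−1 nonzero vectors of GF(2)^n. Write q = (2^{n−1} − 1)/(2^n − 1). Then, with the random pre-code matrix G_pre (systematic (n,k,η) LDPC generator) and the random m×n LT matrix G_LT with i.i.d. LT rows independent of G_pre, the probability that the m×k product matrix G_LT·G_pre over GF(2) has rank k is at most 1 − (2^k − 1)·q^m + (2^k − 1)(2^{k−1} − 1)·( q^3 + (1−q)^3 )^m. -/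

import Mathlib

open Finset

noncomputable section

/-- Probability of a particular realization of a matrix with i.i.d. Bernoulli(η) entries
(each entry equals `1` with probability `η`). -/
def preProb (η : ℝ) {l i : ℕ} (P : Matrix (Fin l) (Fin i) (ZMod 2)) : ℝ :=
  ∏ a : Fin l, ∏ b : Fin i, if P a b = 1 then η else 1 - η

/-- Probability of a particular LT row under degree distribution Ω: a degree
`d ∈ {1,...,n}` is drawn with probability `Ω d`, then the row is uniform among the
`C(n,d)` vectors of Hamming weight `d`. -/
def ltRowProb (n : ℕ) (Ω : ℕ → ℝ) (g : Fin n → ZMod 2) : ℝ :=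
  if hammingNorm g = 0 then 0 else Ω (hammingNorm g) / (n.choose (hammingNorm g) : ℝ)

/-- Probability of a particular LT matrix (i.i.d. LT rows). -/
def ltProb (n : ℕ) (Ω : ℕ → ℝ) {m : ℕ} (G : Matrix (Fin m) (Fin n) (ZMod 2)) : ℝ :=
  ∏ i : Fin m, ltRowProb n Ω (G i)

/-- The systematic pre-code generator matrix `[I_k ; P]` (identity on top of `P`). -/
def Gpre {n k : ℕ} (hkn : k ≤ n) (P : Matrix (Fin (n - k)) (Fin k) (ZMod 2)) :
    Matrix (Fin n) (Fin k) (ZMod 2) :=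
  Matrix.of fun a b =>
    if ha : (a : ℕ) < k then (if (a : ℕ) = (b : ℕ) then 1 else 0)
    else P ⟨(a : ℕ) - k, by have := a.isLt; omega⟩ b

/-- `J(r) = ∑_{d=1}^{n} Ω_d (∑_{s even, 0 ≤ s ≤ d} C(r,s) C(n−r,d−s)) / C(n,d)`. -/
def J (n : ℕ) (Ω : ℕ → ℝ) (r : ℕ) : ℝ :=
  ∑ d ∈ Finset.Icc 1 n, Ω d *
    (∑ s ∈ (Finset.range (d + 1)).filter (fun s => Even s),
        (r.choose s : ℝ) * ((n - r).choose (d - s) : ℝ)) / (n.choose d : ℝ)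

/-- `D(i,r) = C(n−k, r−i) ((1+(1−2η)^i)/2)^{n−k−(r−i)} ((1−(1−2η)^i)/2)^{r−i}`. -/
def D (n k : ℕ) (η : ℝ) (i r : ℕ) : ℝ :=
  ((n - k).choose (r - i) : ℝ) * ((1 + (1 - 2 * η) ^ i) / 2) ^ (n - k - (r - i)) *
    ((1 - (1 - 2 * η) ^ i) / 2) ^ (r - i)

/-- sign character -/
def chi (a : ZMod 2) : ℝ := if a = 0 then 1 else -1

lemma chi_add_one (a : ZMod 2) : chi (a + 1) = - chi a := by
  have h : ∀ a : ZMod 2, (a = 0 ∧ a + 1 ≠ 0) ∨ (a ≠ 0 ∧ a + 1 = 0) := by decide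
  rcases h a with ⟨h1, h2⟩ | ⟨h1, h2⟩ <;> simp [chi, h1, h2]

lemma chi_sum {n : ℕ} (v : Fin n → ZMod 2) (hv : v ≠ 0) :
    ∑ g : Fin n → ZMod 2, chi (g ⬝ᵥ v) = 0 := by
  obtain ⟨i, hi⟩ := Function.ne_iff.mp hv
  have h1 : ∀ a : ZMod 2, a ≠ 0 → a = 1 := by decide
  have hi1 : v i = 1 := h1 _ hi
  have := Equiv.sum_comp (Equiv.addRight (Pi.single i (1 : ZMod 2)))
    (fun g : Fin n → ZMod 2 => chi (g ⬝ᵥ v))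
  simp only [Equiv.coe_addRight, add_dotProduct, single_dotProduct, hi1, mul_one,
    chi_add_one, Finset.sum_neg_distrib] at this
  linarith

lemma ind_one (a : ZMod 2) : (if a = 0 then (1:ℝ) else 0) = (1 + chi a) / 2 := by
  by_cases h : a = 0 <;> simp [chi, h]

lemma ind_two (a b : ZMod 2) : (if a = 0 then (1:ℝ) else 0) * (if b = 0 then (1:ℝ) else 0)
    = (1 + chi a + chi b + chi (a + b)) / 4 := by
  have h : ∀ a b : ZMod 2, (a = 0 ∧ b = 0 ∧ a + b = 0) ∨ (a = 0 ∧ b ≠ 0 ∧ a + b ≠ 0) ∨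
    (a ≠ 0 ∧ b = 0 ∧ a + b ≠ 0) ∨ (a ≠ 0 ∧ b ≠ 0 ∧ a + b = 0) := by decide
  rcases h a b with ⟨h1, h2, h3⟩ | ⟨h1, h2, h3⟩ | ⟨h1, h2, h3⟩ | ⟨h1, h2, h3⟩ <;>
    (unfold chi; split_ifs <;> first | contradiction | norm_num)

lemma card_vec (n : ℕ) : ∑ _g : Fin n → ZMod 2, (1:ℝ) = 2 ^ n := by
  simp [ZMod.card]

lemma sum_ind_one {n : ℕ} (v : Fin n → ZMod 2) (hv : v ≠ 0) :
    ∑ g : Fin n → ZMod 2, (if g ⬝ᵥ v = 0 then (1:ℝ) else 0) = 2 ^ n / 2 := by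
  simp only [ind_one, ← Finset.sum_div, Finset.sum_add_distrib, chi_sum v hv, card_vec, add_zero]

lemma sum_ind_two {n : ℕ} (u v : Fin n → ZMod 2) (hu : u ≠ 0) (hv : v ≠ 0) (huv : u + v ≠ 0) :
    ∑ g : Fin n → ZMod 2, ((if g ⬝ᵥ u = 0 then (1:ℝ) else 0) * (if g ⬝ᵥ v = 0 then (1:ℝ) else 0))
      = 2 ^ n / 4 := by
  simp only [ind_two, ← dotProduct_add]
  simp only [← Finset.sum_div, Finset.sum_add_distrib, chi_sum v hv, chi_sum u hu,
    chi_sum _ huv, card_vec, add_zero]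

/-- row weight -/
def rw' (n : ℕ) (g : Fin n → ZMod 2) : ℝ :=
  ltRowProb n (fun d => (n.choose d : ℝ) / ((2 : ℝ) ^ n - 1)) g

lemma rw_eq (n : ℕ) (g : Fin n → ZMod 2) :
    rw' n g = if g = 0 then 0 else 1 / ((2:ℝ) ^ n - 1) := by
  unfold rw' ltRowProb
  by_cases h : g = 0
  · simp [h]
  · have h1 : hammingNorm g ≤ n := by simpa using hammingNorm_le_card_fintype (x := g)
    have h2 : (n.choose (hammingNorm g) : ℝ) ≠ 0 := by
      exact_mod_cast (Nat.choose_pos h1).ne'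
    simp only [hammingNorm_eq_zero, h, if_false]
    field_simp

lemma row_sum (n : ℕ) (f : (Fin n → ZMod 2) → ℝ) :
    ∑ g, rw' n g * f g = (∑ g, f g - f 0) / ((2:ℝ) ^ n - 1) := by
  rw [← Finset.sum_erase_eq_sub (Finset.mem_univ 0), Finset.sum_div,
    ← Finset.sum_erase (s := Finset.univ) (a := (0 : Fin n → ZMod 2))
      (f := fun g => rw' n g * f g) (by simp [rw_eq])]
  apply Finset.sum_congr rfl
  intro g hg
  have : g ≠ 0 := (Finset.mem_erase.mp hg).1
  simp [rw_eq, this]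
  ring

/-- event that x is in the kernel -/
def av {m n : ℕ} (v : Fin n → ZMod 2) (G : Matrix (Fin m) (Fin n) (ZMod 2)) : ℝ :=
  ∏ i, (if G i ⬝ᵥ v = 0 then (1:ℝ) else 0)

lemma mat_sum {m n : ℕ} (f : (Fin n → ZMod 2) → ℝ) :
    ∑ G : Matrix (Fin m) (Fin n) (ZMod 2),
      ltProb n (fun d => (n.choose d : ℝ) / ((2 : ℝ) ^ n - 1)) G * ∏ i, f (G i)
      = (∑ g, rw' n g * f g) ^ m := by
  rw [Fintype.sum_pow]
  apply Finset.sum_congr rfl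
  intro G _
  rw [Finset.prod_mul_distrib]
  rfl

lemma pre_sum (η : ℝ) (l i : ℕ) :
    ∑ P : Matrix (Fin l) (Fin i) (ZMod 2), preProb η P = 1 := by
  have h0 : ∑ a : ZMod 2, (if a = 1 then η else 1 - η) = 1 := by
    change ∑ a : Fin 2, (if a = (1 : Fin 2) then η else 1 - η) = 1
    simp [Fin.sum_univ_two]
  have h1 := Fintype.sum_pow (fun a : ZMod 2 => if a = 1 then η else 1 - η) i
  have h2 := Fintype.sum_pow
    (fun r : Fin i → ZMod 2 => ∏ b, if r b = 1 then η else 1 - η) l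
  rw [← h1, h0, one_pow, one_pow] at h2
  exact h2.symm

lemma pre_nonneg (η : ℝ) (h0 : 0 ≤ η) (h1 : η ≤ 1) {l i : ℕ}
    (P : Matrix (Fin l) (Fin i) (ZMod 2)) : 0 ≤ preProb η P := by
  unfold preProb
  refine Finset.prod_nonneg fun a _ => Finset.prod_nonneg fun b _ => ?_
  split_ifs <;> linarith

lemma Gpre_inj {n k : ℕ} (hkn : k ≤ n) (P : Matrix (Fin (n - k)) (Fin k) (ZMod 2))
    (x : Fin k → ZMod 2) (hx : x ≠ 0) : (Gpre hkn P).mulVec x ≠ 0 := by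
  intro h
  apply hx
  funext b
  have := congrFun h (Fin.castLE hkn b)
  simpa [Matrix.mulVec, dotProduct, Gpre, Fin.val_inj] using this

lemma av_eq {m n : ℕ} (v : Fin n → ZMod 2) (G : Matrix (Fin m) (Fin n) (ZMod 2)) :
    av v G = if G.mulVec v = 0 then 1 else 0 := by
  unfold av
  rw [Finset.prod_ite_zero]
  simp [funext_iff, Matrix.mulVec]

lemma bonf {m n k : ℕ} (A : Matrix (Fin n) (Fin k) (ZMod 2))
    (G : Matrix (Fin m) (Fin n) (ZMod 2)) :
    (if (G * A).rank = k then (1:ℝ) else 0) ≤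
      1 - ∑ x ∈ univ.erase (0 : Fin k → ZMod 2), av (A.mulVec x) G
        + (∑ x ∈ univ.erase (0 : Fin k → ZMod 2),
            ∑ y ∈ (univ.erase (0 : Fin k → ZMod 2)).erase x,
              av (A.mulVec x) G * av (A.mulVec y) G) / 2 := by
  set S := univ.erase (0 : Fin k → ZMod 2)
  set a : (Fin k → ZMod 2) → ℝ := fun x => av (A.mulVec x) G with ha
  have hidem : ∀ x, a x * a x = a x := by
    intro x
    simp only [ha, av_eq]
    split_ifs <;> simp
  have h2 : ∑ x ∈ S, ∑ y ∈ S.erase x, a x * a y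
      = (∑ x ∈ S, a x) * (∑ x ∈ S, a x) - ∑ x ∈ S, a x := by
    rw [Finset.sum_mul_sum, ← Finset.sum_sub_distrib]
    apply Finset.sum_congr rfl
    intro x hx
    rw [Finset.sum_erase_eq_sub hx, hidem]
  have hN : ∑ x ∈ S, a x = ((S.filter (fun x => G.mulVec (A.mulVec x) = 0)).card : ℝ) := by
    simp only [ha, av_eq]
    simp
  change _ ≤ 1 - ∑ x ∈ S, a x + (∑ x ∈ S, ∑ y ∈ S.erase x, a x * a y) / 2
  rw [h2]
  split_ifs with hr
  · have : ∑ x ∈ S, a x = 0 := by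
      apply Finset.sum_eq_zero
      intro x hx
      have hx0 : x ≠ 0 := (Finset.mem_erase.mp hx).1
      simp only [ha, av_eq]
      rw [if_neg]
      rw [Matrix.mulVec_mulVec]
      intro h
      apply hx0
      have hinj : Function.Injective (G * A).mulVec := by
        rw [Matrix.mulVec_injective_iff, linearIndependent_iff_card_eq_finrank_span,
          Set.finrank, ← Matrix.rank_eq_finrank_span_cols, hr]
        simp
      apply hinj
      rw [h, Matrix.mulVec_zero]
    rw [this]; norm_num
  · rw [hN]
    generalize (S.filter (fun x => G.mulVec (A.mulVec x) = 0)).card = N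
    rcases N with _ | _ | N
    · norm_num
    · norm_num
    · push_cast
      have : (0:ℝ) ≤ N := Nat.cast_nonneg N
      nlinarith

lemma fixed {n k m : ℕ} (hk : 1 ≤ k) (hkn : k ≤ n)
    (P : Matrix (Fin (n - k)) (Fin k) (ZMod 2)) :
    ∑ G : Matrix (Fin m) (Fin n) (ZMod 2),
      (ltProb n (fun d => (n.choose d : ℝ) / ((2 : ℝ) ^ n - 1)) G *
        (if (G * Gpre hkn P).rank = k then 1 else 0))
      ≤ 1 - ((2 : ℝ) ^ k - 1) * (((2 : ℝ) ^ (n - 1) - 1) / ((2 : ℝ) ^ n - 1)) ^ m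
        + ((2 : ℝ) ^ k - 1) * ((2 : ℝ) ^ (k - 1) - 1) *
            ((((2 : ℝ) ^ (n - 1) - 1) / ((2 : ℝ) ^ n - 1)) ^ 3 +
              (1 - ((2 : ℝ) ^ (n - 1) - 1) / ((2 : ℝ) ^ n - 1)) ^ 3) ^ m := by
  obtain ⟨n, rfl⟩ : ∃ n', n = n' + 1 := ⟨n - 1, by omega⟩
  obtain ⟨k, rfl⟩ : ∃ k', k = k' + 1 := ⟨k - 1, by omega⟩
  simp only [Nat.add_sub_cancel]
  have hn1 : (1:ℝ) ≤ 2 ^ n := one_le_pow₀ (by norm_num)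
  have hk1 : (1:ℝ) ≤ 2 ^ k := one_le_pow₀ (by norm_num)
  have hD : (0:ℝ) < 2 ^ (n+1) - 1 := by rw [pow_succ]; linarith
  set A := Gpre hkn P with hA
  set q : ℝ := ((2 : ℝ) ^ n - 1) / ((2 : ℝ) ^ (n+1) - 1) with hq
  set W : Matrix (Fin m) (Fin (n+1)) (ZMod 2) → ℝ :=
    fun G => ltProb (n+1) (fun d => ((n+1).choose d : ℝ) / ((2 : ℝ) ^ (n+1) - 1)) G with hW
  have hrw0 : ∀ g, 0 ≤ rw' (n+1) g := by
    intro g; rw [rw_eq]; split_ifs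
    · exact le_rfl
    · positivity
  have hW0 : ∀ G, 0 ≤ W G := fun G => Finset.prod_nonneg fun i _ => hrw0 (G i)
  have e0 : ∑ G, W G = 1 := by
    have := mat_sum (m := m) (n := n+1) (fun _ => 1)
    rw [row_sum, card_vec, div_self hD.ne', one_pow] at this
    simpa using this
  have e1 : ∀ v : Fin (n+1) → ZMod 2, v ≠ 0 → ∑ G, W G * av v G = q ^ m := by
    intro v hv
    have := mat_sum (m := m) (n := n+1) (fun g => if g ⬝ᵥ v = 0 then (1:ℝ) else 0)
    rw [row_sum, sum_ind_one v hv] at this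
    simp only [zero_dotProduct, if_true] at this
    rw [show ((2:ℝ) ^ (n+1) / 2 - 1) = 2 ^ n - 1 by rw [pow_succ]; ring] at this
    exact this
  set c : ℝ := q ^ 3 + (1 - q) ^ 3 with hc
  have e2 : ∀ u v : Fin (n+1) → ZMod 2, u ≠ 0 → v ≠ 0 → u + v ≠ 0 →
      ∑ G, W G * (av u G * av v G) ≤ c ^ m := by
    intro u v hu hv huv
    have := mat_sum (m := m) (n := n+1)
      (fun g => (if g ⬝ᵥ u = 0 then (1:ℝ) else 0) * (if g ⬝ᵥ v = 0 then (1:ℝ) else 0))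
    have hle : ∑ g, rw' (n+1) g *
        ((if g ⬝ᵥ u = 0 then (1:ℝ) else 0) * (if g ⬝ᵥ v = 0 then (1:ℝ) else 0)) ≤ c := by
      rw [row_sum, sum_ind_two u v hu hv huv]
      simp only [zero_dotProduct, if_true]
      have h1 : ((2:ℝ) ^ (n+1) / 4 - 1 * 1) / (2 ^ (n+1) - 1) ≤ 1 / 4 := by
        rw [div_le_iff₀ hD]; linarith
      have h2 : (1:ℝ) / 4 ≤ c := by
        rw [hc]; nlinarith [sq_nonneg (2 * q - 1)]
      linarith
    have h0 : 0 ≤ ∑ g, rw' (n+1) g *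
        ((if g ⬝ᵥ u = 0 then (1:ℝ) else 0) * (if g ⬝ᵥ v = 0 then (1:ℝ) else 0)) := by
      refine Finset.sum_nonneg fun g _ => mul_nonneg (hrw0 g) ?_
      split_ifs <;> norm_num
    calc ∑ G, W G * (av u G * av v G) = _ := by
          simp only [av, ← Finset.prod_mul_distrib]
          exact this
      _ ≤ c ^ m := pow_le_pow_left₀ h0 hle m
  set S := univ.erase (0 : Fin (k+1) → ZMod 2) with hS
  have hcardN : S.card + 1 = 2 ^ (k+1) := by
    rw [hS, Finset.card_erase_add_one (Finset.mem_univ _)]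
    simp [ZMod.card]
  have hcard : (S.card : ℝ) = 2 ^ (k+1) - 1 := by
    have : ((S.card + 1 : ℕ) : ℝ) = 2 ^ (k+1) := by rw [hcardN]; push_cast; rfl
    push_cast at this; linarith
  calc ∑ G, (W G * (if (G * A).rank = k + 1 then 1 else 0))
      ≤ ∑ G, W G * (1 - ∑ x ∈ S, av (A.mulVec x) G
        + (∑ x ∈ S, ∑ y ∈ S.erase x, av (A.mulVec x) G * av (A.mulVec y) G) / 2) :=
        Finset.sum_le_sum fun G _ => mul_le_mul_of_nonneg_left (bonf A G) (hW0 G)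
    _ = ∑ G, W G - ∑ x ∈ S, ∑ G, W G * av (A.mulVec x) G
        + (∑ x ∈ S, ∑ y ∈ S.erase x, ∑ G, W G * (av (A.mulVec x) G * av (A.mulVec y) G)) / 2 := by
        simp only [mul_add, mul_sub, mul_one, Finset.sum_add_distrib, Finset.sum_sub_distrib,
          Finset.mul_sum, mul_div_assoc', Finset.sum_div]
        congr 1
        · congr 1
          rw [Finset.sum_comm]
        · rw [Finset.sum_comm]
          refine Finset.sum_congr rfl fun x _ => ?_
          rw [Finset.sum_comm]
    _ ≤ 1 - ∑ x ∈ S, q ^ m + (∑ x ∈ S, ∑ y ∈ S.erase x, c ^ m) / 2 := by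
        rw [e0]
        have t1 : ∑ x ∈ S, ∑ G, W G * av (A.mulVec x) G = ∑ x ∈ S, q ^ m := by
          refine Finset.sum_congr rfl fun x hx => e1 _ ?_
          exact Gpre_inj hkn P x (Finset.mem_erase.mp hx).1
        have t2 : ∑ x ∈ S, ∑ y ∈ S.erase x, ∑ G, W G * (av (A.mulVec x) G * av (A.mulVec y) G)
            ≤ ∑ x ∈ S, ∑ y ∈ S.erase x, c ^ m := by
          refine Finset.sum_le_sum fun x hx => Finset.sum_le_sum fun y hy => ?_
          have hy' := Finset.mem_erase.mp hy
          apply e2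
          · exact Gpre_inj hkn P x (Finset.mem_erase.mp hx).1
          · exact Gpre_inj hkn P y (Finset.mem_erase.mp hy'.2).1
          · rw [← Matrix.mulVec_add]
            apply Gpre_inj
            intro h
            apply hy'.1
            funext b
            have hb := congrFun h b
            have hd : ∀ s t : ZMod 2, s + t = 0 → t = s := by decide
            exact hd _ _ hb
        rw [t1]; linarith
    _ = _ := by
        have t : ∑ x ∈ S, ∑ y ∈ S.erase x, c ^ m = S.card * ((S.card - 1) * c ^ m) := by
          rw [← nsmul_eq_mul, ← Finset.sum_const]
          refine Finset.sum_congr rfl fun x hx => ?_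
          rw [Finset.sum_const, nsmul_eq_mul, ← Finset.card_erase_add_one hx]
          push_cast; ring
        rw [t, Finset.sum_const, nsmul_eq_mul, hcard, pow_succ]
        ring

/-- Corollary 2: with the binomial degree distribution
`Ω_d = C(n,d)/(2^n − 1)` and `q = (2^{n−1} − 1)/(2^n − 1)`, the decoding success
probability is at most `1 − (2^k − 1) q^m + (2^k − 1)(2^{k−1} − 1)(q³ + (1−q)³)^m`. -/
theorem raptor_binomial_upper_bound
    (n k m : ℕ) (η : ℝ)
    (hk : 1 ≤ k) (hkn : k ≤ n) (hm : k ≤ m)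
    (hη0 : 0 ≤ η) (hη1 : η ≤ 1) :
    (∑ P : Matrix (Fin (n - k)) (Fin k) (ZMod 2),
        ∑ G : Matrix (Fin m) (Fin n) (ZMod 2),
          if (G * Gpre hkn P).rank = k then
            preProb η P * ltProb n (fun d => (n.choose d : ℝ) / ((2 : ℝ) ^ n - 1)) G
          else 0)
      ≤ 1 - ((2 : ℝ) ^ k - 1) * (((2 : ℝ) ^ (n - 1) - 1) / ((2 : ℝ) ^ n - 1)) ^ m
        + ((2 : ℝ) ^ k - 1) * ((2 : ℝ) ^ (k - 1) - 1) *
            ((((2 : ℝ) ^ (n - 1) - 1) / ((2 : ℝ) ^ n - 1)) ^ 3 +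
              (1 - ((2 : ℝ) ^ (n - 1) - 1) / ((2 : ℝ) ^ n - 1)) ^ 3) ^ m := by
  calc _ = ∑ P : Matrix (Fin (n - k)) (Fin k) (ZMod 2), preProb η P *
        ∑ G : Matrix (Fin m) (Fin n) (ZMod 2),
          (ltProb n (fun d => (n.choose d : ℝ) / ((2 : ℝ) ^ n - 1)) G *
            (if (G * Gpre hkn P).rank = k then 1 else 0)) := by
        refine Finset.sum_congr rfl fun P _ => ?_
        rw [Finset.mul_sum]
        refine Finset.sum_congr rfl fun G _ => ?_
        split_ifs <;> simp
    _ ≤ ∑ P : Matrix (Fin (n - k)) (Fin k) (ZMod 2), preProb η P * _ :=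
        Finset.sum_le_sum fun P _ =>
          mul_le_mul_of_nonneg_left (fixed hk hkn P) (pre_nonneg η hη0 hη1 P)
    _ = _ := by rw [← Finset.sum_mul, pre_sum, one_mul]
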